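/- Define a state to be a tuple (Γᵢ, Γⱼ, wL, wE, wR) where Γᵢ, Γⱼ are lists of integers and wL, wE, wR ∈ ℕ × ℕ, with initial state ([1], [1], (1,0), (1,1), (0,1)). Process a finite word in the letters {L, R} from left to right by: on letter L, replace the state by (Γᵢ with its last entry increased by 1, 2 :: Γⱼ, wL, wL + wE, wE); on letter R, replace it by (Γᵢ ++ [2], Γⱼ with its first entry increased by 1, wE, wE + wR, wR), where addition of pairs is componentwise. Then for every word w, if the resulting state is (Γᵢ, Γⱼ, wL, (a,b), wR), the tridiagonal determinants satisfy: |Γᵢ| = a, |tail of Γᵢ| = b, |Γⱼ| = b, and |Γⱼ with its last entry removed| = a. -/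

import Mathlib

/-- The symmetric tridiagonal matrix with diagonal entries given by the list `L`
and `-1` immediately above and below the diagonal. -/
def triMat (L : List ℤ) : Matrix (Fin L.length) (Fin L.length) ℤ :=
  Matrix.of fun i j =>
    if (i : ℕ) = (j : ℕ) then L.get i
    else if (i : ℕ) + 1 = (j : ℕ) ∨ (j : ℕ) + 1 = (i : ℕ) then -1 else 0

/-- The tridiagonal determinant `|n₁, …, n_k|`; the determinant of the empty list is `1`. -/
def tridet (L : List ℤ) : ℤ := (triMat L).det

/-- The two letters encoding a blowup on the left or on the right. -/
inductive Letter
  | L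
  | R

/-- Increase the first entry of a list of integers by `1`. -/
def incFirst : List ℤ → List ℤ
  | [] => []
  | a :: l => (a + 1) :: l

/-- Increase the last entry of a list of integers by `1`. -/
def incLast (l : List ℤ) : List ℤ := (incFirst l.reverse).reverse

/-- A state `(Γᵢ, Γⱼ, wL, wE, wR)`: the two chains of the dual graph on either side of
the final `(-1)`-curve, and three weight vectors in `ℕ × ℕ`. -/
abbrev BlowupState := List ℤ × List ℤ × (ℕ × ℕ) × (ℕ × ℕ) × (ℕ × ℕ)

/-- Processing one letter: on `L`, increase the last entry of `Γᵢ` by `1`, prepend `2`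
to `Γⱼ`, and replace `(wL, wE, wR)` by `(wL, wL + wE, wE)`; on `R`, append `2` to `Γᵢ`,
increase the first entry of `Γⱼ` by `1`, and replace `(wL, wE, wR)` by `(wE, wE + wR, wR)`. -/
def blowupStep : BlowupState → Letter → BlowupState
  | (Γi, Γj, wL, wE, wR), .L => (incLast Γi, 2 :: Γj, wL, wL + wE, wE)
  | (Γi, Γj, wL, wE, wR), .R => (Γi ++ [2], incFirst Γj, wE, wE + wR, wR)

/-- The initial state `([1], [1], (1,0), (1,1), (0,1))`. -/
def blowupInit : BlowupState := ([1], [1], (1, 0), (1, 1), (0, 1))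

theorem tridet_nil : tridet [] = 1 := by
  simp [tridet]

theorem tridet_single (x : ℤ) : tridet [x] = x := by
  unfold tridet
  rw [Matrix.det_eq_elem_of_card_eq_one (by simp) (⟨0, by simp⟩ : Fin [x].length)]
  simp [triMat]

theorem tridet_cons_cons (x y : ℤ) (l : List ℤ) :
    tridet (x :: y :: l) = x * tridet (y :: l) - tridet l := by
  have key : ∀ A : Matrix (Fin (l.length + 2)) (Fin (l.length + 2)) ℤ,
      A = triMat (x :: y :: l) →
      A.det = x * tridet (y :: l) - tridet l := by
    intro A hA
    rw [Matrix.det_succ_row_zero, Fin.sum_univ_succ, Fin.sum_univ_succ, Finset.sum_eq_zero]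
    · have h1 : A.submatrix Fin.succ (Fin.succAbove 0) = triMat (y :: l) := by
        subst hA
        ext i j
        simp [triMat]
      have h2 : (A.submatrix Fin.succ (Fin.succAbove (Fin.succ 0))).det = - tridet l := by
        rw [Matrix.det_succ_column_zero, Fin.sum_univ_succ, Finset.sum_eq_zero]
        · have h3 : (A.submatrix Fin.succ (Fin.succAbove (Fin.succ 0))).submatrix
              (Fin.succAbove 0) Fin.succ = triMat l := by
            subst hA
            ext i j
            have : (Fin.succAbove (Fin.succ 0) j.succ : Fin (l.length + 2)) = j.succ.succ := by
              rw [Fin.succ_succAbove_succ]; simp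
            simp only [Matrix.submatrix_apply, this]
            simp [triMat]
          rw [h3]
          subst hA
          simp [triMat, tridet]
        · intro i _
          subst hA
          simp [triMat]
      rw [h1, h2]
      subst hA
      simp [triMat, tridet]
      ring
    · intro i _
      subst hA
      simp [triMat]
  exact key _ rfl

/-- Transfer matrix of one entry. -/
def trT (x : ℤ) : Matrix (Fin 2) (Fin 2) ℤ := !![x, -1; 1, 0]

/-- Transfer matrix of a list. -/
def trM (l : List ℤ) : Matrix (Fin 2) (Fin 2) ℤ := (l.map trT).prod

theorem trM_cons (x : ℤ) (l : List ℤ) : trM (x :: l) = trT x * trM l := by simp [trM]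

theorem trM_snoc (x : ℤ) (l : List ℤ) : trM (l ++ [x]) = trM l * trT x := by simp [trM]

theorem trM_00 : ∀ l : List ℤ, trM l 0 0 = tridet l
  | [] => by simp [trM, tridet_nil]
  | [x] => by simp [trM, trT, tridet_single]
  | x :: y :: l => by
    rw [tridet_cons_cons, ← trM_00 (y :: l), ← trM_00 l, trM_cons, trM_cons]
    simp only [trT, Matrix.mul_apply, Fin.sum_univ_two, Matrix.of_apply, Matrix.cons_val_zero,
      Matrix.cons_val_one]
    ring

theorem trM_10 (l : List ℤ) (h : l ≠ []) : trM l 1 0 = tridet l.tail := by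
  cases l with
  | nil => exact absurd rfl h
  | cons x l =>
    rw [trM_cons, List.tail_cons, ← trM_00]
    simp [trT, Matrix.mul_apply, Fin.sum_univ_two]

theorem trM_01 (l : List ℤ) (h : l ≠ []) : trM l 0 1 = - tridet l.dropLast := by
  obtain ⟨p, x, rfl⟩ := (List.eq_nil_or_concat' l).resolve_left h
  rw [trM_snoc, List.dropLast_concat, ← trM_00]
  simp [trT, Matrix.mul_apply, Fin.sum_univ_two]

/-- The invariant of the blowup process. -/
def BInv (s : BlowupState) : Prop :=
  s.1 ≠ [] ∧ s.2.1 ≠ [] ∧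
  s.2.2.2.1 = s.2.2.1 + s.2.2.2.2 ∧
  trM s.1 = !![(s.2.2.2.1.1 : ℤ), -(s.2.2.1.1 : ℤ); (s.2.2.2.1.2 : ℤ), -(s.2.2.1.2 : ℤ)] ∧
  trM s.2.1 = !![(s.2.2.2.1.2 : ℤ), -(s.2.2.2.1.1 : ℤ);
    (s.2.2.2.2.2 : ℤ), -(s.2.2.2.2.1 : ℤ)]

theorem trM_incFirst (l : List ℤ) (h : l ≠ []) :
    trM (incFirst l) = !![1, 1; 0, 1] * trM l := by
  cases l with
  | nil => exact absurd rfl h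
  | cons x l =>
    rw [incFirst, trM_cons, trM_cons, ← Matrix.mul_assoc]
    congr 1
    ext i j
    fin_cases i <;> fin_cases j <;> simp [trT]

theorem trM_incLast (l : List ℤ) (h : l ≠ []) :
    trM (incLast l) = trM l * !![1, 0; -1, 1] := by
  obtain ⟨p, x, rfl⟩ := (List.eq_nil_or_concat' l).resolve_left h
  have : incLast (p ++ [x]) = p ++ [x + 1] := by simp [incLast, incFirst]
  rw [this, trM_snoc, trM_snoc, Matrix.mul_assoc]
  congr 1
  ext i j
  fin_cases i <;> fin_cases j <;> simp [trT]

theorem incFirst_ne (l : List ℤ) (h : l ≠ []) : incFirst l ≠ [] := by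
  cases l <;> simp_all [incFirst]

theorem incLast_ne (l : List ℤ) (h : l ≠ []) : incLast l ≠ [] := by
  have := incFirst_ne l.reverse (by simpa using h)
  simpa [incLast] using this

theorem BInv_step (s : BlowupState) (c : Letter) (h : BInv s) : BInv (blowupStep s c) := by
  obtain ⟨Γi, Γj, ⟨l1, l2⟩, ⟨e1, e2⟩, ⟨r1, r2⟩⟩ := s
  obtain ⟨hi, hj, hw, hMi, hMj⟩ := h
  simp only [Prod.mk_add_mk, Prod.mk.injEq] at hi hj hw hMi hMj
  obtain ⟨rfl, rfl⟩ := hw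
  cases c with
  | L =>
    refine ⟨incLast_ne _ hi, by simp [blowupStep], ?_, ?_, ?_⟩
    · simp [blowupStep]
    · simp only [blowupStep]
      rw [trM_incLast _ hi, hMi]
      ext i j
      fin_cases i <;> fin_cases j <;> simp <;> ring
    · simp only [blowupStep]
      rw [trM_cons, hMj]
      ext i j
      fin_cases i <;> fin_cases j <;> simp [trT] <;> ring
  | R =>
    refine ⟨by simp [blowupStep], incFirst_ne _ hj, ?_, ?_, ?_⟩
    · simp [blowupStep]
    · simp only [blowupStep]
      rw [trM_snoc, hMi]
      ext i j
      fin_cases i <;> fin_cases j <;> simp [trT] <;> ring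
    · simp only [blowupStep]
      rw [trM_incFirst _ hj, hMj]
      ext i j
      fin_cases i <;> fin_cases j <;> simp <;> ring

theorem BInv_foldl (w : List Letter) : ∀ s, BInv s → BInv (w.foldl blowupStep s) := by
  induction w with
  | nil => intro s h; exact h
  | cons c w ih => intro s h; exact ih _ (BInv_step s c h)

theorem BInv_init : BInv blowupInit := by
  refine ⟨by simp [blowupInit], by simp [blowupInit], by simp [blowupInit], ?_, ?_⟩ <;>
    simp [blowupInit, trM, trT]

/-- After processing any word in the letters `{L, R}`, if the resulting state is
`(Γᵢ, Γⱼ, wL, (a, b), wR)`, then `|Γᵢ| = a`, `|tail Γᵢ| = b`, `|Γⱼ| = b`, and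
`|Γⱼ with its last entry removed| = a`. -/
theorem blowup_tridet (w : List Letter) (Γi Γj : List ℤ) (wL wR : ℕ × ℕ) (a b : ℕ)
    (h : w.foldl blowupStep blowupInit = (Γi, Γj, wL, (a, b), wR)) :
    tridet Γi = (a : ℤ) ∧ tridet Γi.tail = (b : ℤ) ∧
    tridet Γj = (b : ℤ) ∧ tridet Γj.dropLast = (a : ℤ) := by
  have hI := BInv_foldl w _ BInv_init
  rw [h] at hI
  obtain ⟨hi, hj, -, hMi, hMj⟩ := hI
  simp only at hi hj hMi hMj
  refine ⟨?_, ?_, ?_, ?_⟩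
  · rw [← trM_00, hMi]; simp
  · rw [← trM_10 _ hi, hMi]; simp
  · rw [← trM_00, hMj]; simp
  · have := trM_01 _ hj
    rw [hMj] at this
    simp at this
    exact this.symm
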